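/- If B and B′ are two n×n quaternion matrices in modified Jordan form (block upper bidiagonal with diagonal blocks λ_t·I_{n_t}, λ_t complex with nonnegative imaginary part, λ₁ ⪰ ⋯ ⪰ λ_s; superdiagonal block G_{t,t+1} = 0 if λ_t ≠ λ_{t+1}, and G_{t,t+1} = [I_{n_{t+1}}; 0] with n_t ≥ n_{t+1} if λ_t = λ_{t+1}; all other blocks zero) and B is similar to B′ over ℍ, then B = B′. -/

import Mathlib

open Matrix
open scoped Quaternion

noncomputable section

/-- A quaternion matrix `U` is unitary if `Uᴴ * U = 1`. -/
def IsUnitaryM {m : Type*} [Fintype m] [DecidableEq m] (U : Matrix m m ℍ[ℝ]) : Prop :=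
  Uᴴ * U = 1

/-- `A` and `B` are unitarily similar if `A = Uᴴ * B * U` for some unitary `U`. -/
def UnitarilySimilar {m : Type*} [Fintype m] [DecidableEq m] (A B : Matrix m m ℍ[ℝ]) : Prop :=
  ∃ U : Matrix m m ℍ[ℝ], IsUnitaryM U ∧ A = Uᴴ * B * U

/-- The embedding of `ℂ = ℝ + ℝi` into the quaternions. -/
def cq (z : ℂ) : ℍ[ℝ] := ⟨z.re, z.im, 0, 0⟩

/-- The ordering `⪰` on complex numbers: `a+bi ⪰ c+di` iff (`a ≥ c` and `b = d`) or `b > d`. -/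
def csucceq (z w : ℂ) : Prop := (w.re ≤ z.re ∧ z.im = w.im) ∨ w.im < z.im

/-- `A` and `B` are similar over `ℍ`: `A = S⁻¹ * B * S` for some invertible `S`. -/
def SimilarQ {m : Type*} [Fintype m] [DecidableEq m] (A B : Matrix m m ℍ[ℝ]) : Prop :=
  ∃ S : (Matrix m m ℍ[ℝ])ˣ, A = (S⁻¹).val * B * S.val

/-- `psum sz m` is the sum of the first `m` block sizes: the starting index of block `m`. -/
def psum {s : ℕ} (sz : Fin s → ℕ) (m : ℕ) : ℕ :=
  ∑ t ∈ Finset.range m, if h : t < s then sz ⟨t, h⟩ else 0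

/-- Row/column index `r` belongs to the `i`-th diagonal block of the partition `sz`. -/
def InBlock {s : ℕ} (sz : Fin s → ℕ) (i : Fin s) (r : ℕ) : Prop :=
  psum sz i ≤ r ∧ r < psum sz ((i : ℕ) + 1)

/-- `B` is a modified Jordan matrix: block upper bidiagonal for a partition `sz` with `s`
blocks; diagonal blocks `λ_t • I` with `λ_t` complex with nonnegative imaginary part and
`λ_1 ⪰ ⋯ ⪰ λ_s`; superdiagonal block `G_{t,t+1} = 0` if `λ_t ≠ λ_{t+1}` while if
`λ_t = λ_{t+1}` then `n_t ≥ n_{t+1}` and `G_{t,t+1} = [I; 0]`; all other blocks zero. -/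
def IsModifiedJordan {n : ℕ} (B : Matrix (Fin n) (Fin n) ℍ[ℝ]) : Prop :=
  ∃ (s : ℕ) (sz : Fin s → ℕ) (lam : Fin s → ℂ),
    (∀ t, 0 < sz t) ∧ (∑ t, sz t) = n ∧
    (∀ t, 0 ≤ (lam t).im) ∧
    (∀ (t : Fin s) (h : (t : ℕ) + 1 < s), csucceq (lam t) (lam ⟨(t : ℕ) + 1, h⟩)) ∧
    (∀ (x y : Fin n) (t : Fin s), InBlock sz t x → InBlock sz t y →
        B x y = if x = y then cq (lam t) else 0) ∧
    (∀ (x y : Fin n) (t u : Fin s), InBlock sz t x → InBlock sz u y →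
        (u : ℕ) ≠ (t : ℕ) → (u : ℕ) ≠ (t : ℕ) + 1 → B x y = 0) ∧
    (∀ (t : Fin s) (h : (t : ℕ) + 1 < s),
        (lam t ≠ lam ⟨(t : ℕ) + 1, h⟩ →
          ∀ x y : Fin n, InBlock sz t x → InBlock sz ⟨(t : ℕ) + 1, h⟩ y → B x y = 0) ∧
        (lam t = lam ⟨(t : ℕ) + 1, h⟩ →
          sz ⟨(t : ℕ) + 1, h⟩ ≤ sz t ∧
          ∀ x y : Fin n, InBlock sz t x → InBlock sz ⟨(t : ℕ) + 1, h⟩ y →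
            B x y = if (x : ℕ) - psum sz t = (y : ℕ) - psum sz ((t : ℕ) + 1)
              then 1 else 0))

/-- The real number pair by which `csucceq` orders complex numbers lexicographically. -/
def lexKey (z : ℂ) : ℝ ×ₗ ℝ := toLex (-z.im, -z.re)

theorem lexKey_injective : Function.Injective lexKey := by
  intro z w h
  simp only [lexKey, EmbeddingLike.apply_eq_iff_eq, Prod.mk.injEq, neg_inj] at h
  exact Complex.ext h.2 h.1

theorem lexKey_le_of_csucceq {z w : ℂ} (h : csucceq z w) : lexKey z ≤ lexKey w := by
  rw [lexKey, lexKey, Prod.Lex.toLex_le_toLex]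
  rcases h with ⟨h, h'⟩ | h
  · exact Or.inr ⟨by simpa using h', by simpa using h⟩
  · exact Or.inl (by simpa using h)

theorem re_cq (z : ℂ) : (cq z).re = z.re := rfl

theorem imI_cq (z : ℂ) : (cq z).imI = z.im := rfl

theorem imJ_cq (z : ℂ) : (cq z).imJ = 0 := rfl

theorem imK_cq (z : ℂ) : (cq z).imK = 0 := rfl

theorem eq_zero_of_cq_mul_eq {z w : ℂ} (hz : 0 ≤ z.im) (hw : 0 ≤ w.im) (hne : z ≠ w)
    {q : ℍ[ℝ]} (h : cq z * q = q * cq w) : q = 0 := by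
  have h₁ := congrArg QuaternionAlgebra.re h
  have h₂ := congrArg QuaternionAlgebra.imI h
  have h₃ := congrArg QuaternionAlgebra.imJ h
  have h₄ := congrArg QuaternionAlgebra.imK h
  simp only [Quaternion.re_mul, Quaternion.imI_mul, Quaternion.imJ_mul, Quaternion.imK_mul,
    re_cq, imI_cq, imJ_cq, imK_cq] at h₁ h₂ h₃ h₄
  set a := z.re - w.re with ha
  by_cases hre : a = 0
  · have hre' : z.re = w.re := by linarith
    have hd : z.im - w.im ≠ 0 := fun hd => hne (Complex.ext hre' (by linarith))
    have hs : z.im + w.im ≠ 0 := fun hs => hd (by linarith)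
    rw [hre'] at h₁ h₂ h₃ h₄
    ext
    · exact (mul_eq_zero.1 (show (z.im - w.im) * q.re = 0 by linarith)).resolve_left hd
    · exact (mul_eq_zero.1 (show (z.im - w.im) * q.imI = 0 by linarith)).resolve_left hd
    · exact (mul_eq_zero.1 (show (z.im + w.im) * q.imJ = 0 by linarith)).resolve_left hs
    · exact (mul_eq_zero.1 (show (z.im + w.im) * q.imK = 0 by linarith)).resolve_left hs
  · have hd : a ^ 2 + (z.im - w.im) ^ 2 ≠ 0 := by positivity
    have hs : a ^ 2 + (z.im + w.im) ^ 2 ≠ 0 := by positivity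
    ext
    · refine (mul_eq_zero.1 (?_ : (a ^ 2 + (z.im - w.im) ^ 2) * q.re = 0)).resolve_left hd
      linear_combination a * h₁ + (z.im - w.im) * h₂
    · refine (mul_eq_zero.1 (?_ : (a ^ 2 + (z.im - w.im) ^ 2) * q.imI = 0)).resolve_left hd
      linear_combination a * h₂ - (z.im - w.im) * h₁
    · refine (mul_eq_zero.1 (?_ : (a ^ 2 + (z.im + w.im) ^ 2) * q.imJ = 0)).resolve_left hs
      linear_combination a * h₃ + (z.im + w.im) * h₄
    · refine (mul_eq_zero.1 (?_ : (a ^ 2 + (z.im + w.im) ^ 2) * q.imK = 0)).resolve_left hs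
      linear_combination a * h₄ - (z.im + w.im) * h₃

/-- The real subspace of quaternions commuting with the complex number `z`. -/
def commutant (z : ℂ) : Submodule ℝ ℍ[ℝ] :=
  (Subalgebra.centralizer ℝ {cq z}).toSubmodule

theorem mem_commutant {z : ℂ} {q : ℍ[ℝ]} : q ∈ commutant z ↔ cq z * q = q * cq z := by
  simp [commutant, Subalgebra.mem_centralizer_iff]

theorem finrank_commutant_pos (z : ℂ) : 0 < Module.finrank ℝ (commutant z) := by
  have : Nontrivial (commutant z) :=
    ⟨⟨0, ⟨1, mem_commutant.2 (by simp)⟩, fun h => zero_ne_one (congrArg Subtype.val h)⟩⟩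
  exact Module.finrank_pos

theorem mem_commutant_of_commutator_mem {z : ℂ} {q : ℍ[ℝ]}
    (h : cq z * q - q * cq z ∈ commutant z) : q ∈ commutant z := by
  rw [mem_commutant] at h ⊢
  have h₃ := congrArg QuaternionAlgebra.imJ h
  have h₄ := congrArg QuaternionAlgebra.imK h
  simp only [Quaternion.re_mul, Quaternion.imI_mul, Quaternion.imJ_mul, Quaternion.imK_mul,
    Quaternion.re_sub, Quaternion.imI_sub, Quaternion.imJ_sub, Quaternion.imK_sub,
    re_cq, imI_cq, imJ_cq, imK_cq] at h₃ h₄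
  have key : z.im = 0 ∨ (q.imJ = 0 ∧ q.imK = 0) := by
    by_cases hz : z.im = 0
    · exact Or.inl hz
    · refine Or.inr ⟨?_, ?_⟩
      · exact (mul_eq_zero.1 (show z.im ^ 2 * q.imJ = 0 by linarith)).resolve_left (by positivity)
      · exact (mul_eq_zero.1 (show z.im ^ 2 * q.imK = 0 by linarith)).resolve_left (by positivity)
  ext <;> simp only [Quaternion.re_mul, Quaternion.imI_mul, Quaternion.imJ_mul,
    Quaternion.imK_mul, re_cq, imI_cq, imJ_cq, imK_cq] <;>
    rcases key with key | ⟨key, key'⟩ <;> simp [*] <;> ring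

section Shift

variable {n : ℕ}

/-- The real linear map `v ↦ B v - v z` on quaternion column vectors. -/
def shiftMap (B : Matrix (Fin n) (Fin n) ℍ[ℝ]) (z : ℂ) :
    (Fin n → ℍ[ℝ]) →ₗ[ℝ] (Fin n → ℍ[ℝ]) where
  toFun v x := (B *ᵥ v) x - v x * cq z
  map_add' v w := by
    ext1 x
    simp only [Matrix.mulVec_add, Pi.add_apply, add_mul]
    abel
  map_smul' c v := by
    ext1 x
    simp only [Matrix.mulVec_smul, Pi.smul_apply, smul_sub, smul_mul_assoc, RingHom.id_apply]

theorem shiftMap_apply (B : Matrix (Fin n) (Fin n) ℍ[ℝ]) (z : ℂ) (v : Fin n → ℍ[ℝ]) (x : Fin n) :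
    shiftMap B z v x = (B *ᵥ v) x - v x * cq z := rfl

/-- Left multiplication of column vectors by an invertible matrix. -/
def unitMulVec (S : (Matrix (Fin n) (Fin n) ℍ[ℝ])ˣ) :
    (Fin n → ℍ[ℝ]) ≃ₗ[ℝ] (Fin n → ℍ[ℝ]) where
  toFun v := S.val *ᵥ v
  invFun v := S⁻¹.val *ᵥ v
  map_add' v w := Matrix.mulVec_add _ v w
  map_smul' c v := Matrix.mulVec_smul _ c v
  left_inv v := by simp [Matrix.mulVec_mulVec]
  right_inv v := by simp [Matrix.mulVec_mulVec]

theorem finrank_ker_shiftMap_pow {B B' : Matrix (Fin n) (Fin n) ℍ[ℝ]} (h : SimilarQ B B')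
    (z : ℂ) (k : ℕ) :
    Module.finrank ℝ (LinearMap.ker (shiftMap B z ^ k)) =
      Module.finrank ℝ (LinearMap.ker (shiftMap B' z ^ k)) := by
  obtain ⟨S, hS⟩ := h
  have hcomm : S.val * B = B' * S.val := by
    rw [hS, mul_assoc, ← mul_assoc S.val, Units.mul_inv, one_mul]
  have step (v : Fin n → ℍ[ℝ]) :
      shiftMap B' z (unitMulVec S v) = unitMulVec S (shiftMap B z v) := by
    have hz : (S.val *ᵥ fun x => v x * cq z) = fun x => (S.val *ᵥ v) x * cq z := by
      ext1 x
      simp only [Matrix.mulVec, dotProduct, Finset.sum_mul, mul_assoc]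
    change (fun x => (B' *ᵥ (S.val *ᵥ v)) x - (S.val *ᵥ v) x * cq z) =
      S.val *ᵥ (B *ᵥ v - fun x => v x * cq z)
    rw [Matrix.mulVec_sub, hz, Matrix.mulVec_mulVec, Matrix.mulVec_mulVec, hcomm]
    rfl
  have steps (v : Fin n → ℍ[ℝ]) :
      (shiftMap B' z ^ k) (unitMulVec S v) = unitMulVec S ((shiftMap B z ^ k) v) := by
    induction k with
    | zero => simp
    | succ k ih => rw [pow_succ', pow_succ', Module.End.mul_apply, ih, step, Module.End.mul_apply]
  have hker : (LinearMap.ker (shiftMap B z ^ k)).map (unitMulVec S).toLinearMap =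
      LinearMap.ker (shiftMap B' z ^ k) := by
    ext w
    obtain ⟨v, rfl⟩ := (unitMulVec S).surjective w
    simp [steps]
  rw [← hker, LinearEquiv.finrank_map_eq]

/-- The vectors with entries in `C` that are supported in `E`. -/
def supportedIn (E : Finset (Fin n)) (C : Submodule ℝ ℍ[ℝ]) : Submodule ℝ (Fin n → ℍ[ℝ]) where
  carrier := {v | ∀ x, v x ∈ C ∧ (x ∉ E → v x = 0)}
  zero_mem' x := ⟨C.zero_mem, fun _ => rfl⟩
  add_mem' hv hw x :=
    ⟨C.add_mem (hv x).1 (hw x).1, fun hx => by simp [(hv x).2 hx, (hw x).2 hx]⟩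
  smul_mem' c v hv x := ⟨C.smul_mem c (hv x).1, fun hx => by simp [(hv x).2 hx]⟩

theorem mem_supportedIn {E : Finset (Fin n)} {C : Submodule ℝ ℍ[ℝ]} {v : Fin n → ℍ[ℝ]} :
    v ∈ supportedIn E C ↔ ∀ x, v x ∈ C ∧ (x ∉ E → v x = 0) := Iff.rfl

/-- Vectors supported in `E` are families indexed by `E`. -/
def supportedInEquiv (E : Finset (Fin n)) (C : Submodule ℝ ℍ[ℝ]) :
    supportedIn E C ≃ₗ[ℝ] (E → C) where
  toFun v x := ⟨v.1 x, (v.2 x).1⟩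
  invFun w := ⟨fun x => if h : x ∈ E then w ⟨x, h⟩ else 0, fun x => by
    by_cases h : x ∈ E <;> simp [h]⟩
  map_add' v w := rfl
  map_smul' c v := rfl
  left_inv v := by
    ext1
    funext x
    by_cases h : x ∈ E
    · simp [h]
    · simp [h, (v.2 x).2 h]
  right_inv w := by
    funext x
    ext1
    simp

theorem finrank_supportedIn (E : Finset (Fin n)) (C : Submodule ℝ ℍ[ℝ]) :
    Module.finrank ℝ (supportedIn E C) = E.card * Module.finrank ℝ C := by
  rw [(supportedInEquiv E C).finrank_eq, Module.finrank_pi_fintype]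
  simp

end Shift

section Weyr

variable {n : ℕ}

/-- `y` follows `x` in a chain: it has the same eigenvalue, one more depth, and the same offset
within its block. -/
def IsNext (lam : Fin n → ℂ) (dep : Fin n → ℕ) (x y : Fin n) : Prop :=
  lam y = lam x ∧ dep y = dep x + 1 ∧
    (y : ℕ) = x + {w | lam w = lam x ∧ dep w = dep x}.ncard

/-- A description of a modified Jordan matrix by the eigenvalue and the depth (the position of
the block among those with the same eigenvalue) attached to each index. -/
structure IsWeyr (B : Matrix (Fin n) (Fin n) ℍ[ℝ]) (lam : Fin n → ℂ) (dep : Fin n → ℕ) :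
    Prop where
  im_nonneg : ∀ x, 0 ≤ (lam x).im
  monotone : Monotone fun x => toLex (lexKey (lam x), dep x)
  diag : ∀ x, B x x = cq (lam x)
  next : ∀ x y, IsNext lam dep x y → B x y = 1
  off : ∀ x y, x ≠ y → ¬ IsNext lam dep x y → B x y = 0
  exists_prev : ∀ y, dep y ≠ 0 → ∃ x, IsNext lam dep x y

theorem IsNext.ne {lam : Fin n → ℂ} {dep : Fin n → ℕ} {x y : Fin n} (h : IsNext lam dep x y) :
    y ≠ x := by
  rintro rfl
  exact absurd h.2.1 (by omega)

theorem IsNext.unique {lam : Fin n → ℂ} {dep : Fin n → ℕ} {x y w : Fin n}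
    (h : IsNext lam dep x y) (h' : IsNext lam dep x w) : y = w :=
  Fin.ext (h.2.2.trans h'.2.2.symm)

/-- The indices with eigenvalue `z` and depth less than `k`. -/
def layers (lam : Fin n → ℂ) (dep : Fin n → ℕ) (z : ℂ) (k : ℕ) : Finset (Fin n) :=
  {x | lam x = z ∧ dep x < k}

theorem mem_layers {lam : Fin n → ℂ} {dep : Fin n → ℕ} {z : ℂ} {k : ℕ} {x : Fin n} :
    x ∈ layers lam dep z k ↔ lam x = z ∧ dep x < k := by
  simp [layers]

theorem card_layers_succ (lam : Fin n → ℂ) (dep : Fin n → ℕ) (z : ℂ) (k : ℕ) :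
    (layers lam dep z (k + 1)).card =
      (layers lam dep z k).card + Fintype.card {x // lam x = z ∧ dep x = k} := by
  rw [Fintype.card_subtype, ← Finset.card_union_of_disjoint]
  · congr 1
    ext x
    simp only [mem_layers, Finset.mem_union, Finset.mem_filter, Finset.mem_univ, true_and,
      Nat.lt_succ_iff_lt_or_eq]
    tauto
  · rw [Finset.disjoint_left]
    intro x hx hx'
    exact (mem_layers.1 hx).2.ne (Finset.mem_filter.1 hx').2.2

namespace IsWeyr

variable {B : Matrix (Fin n) (Fin n) ℍ[ℝ]} {lam : Fin n → ℂ} {dep : Fin n → ℕ}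

theorem shiftMap_of_isNext (hB : IsWeyr B lam dep) (z : ℂ) (v : Fin n → ℍ[ℝ]) {x y : Fin n}
    (h : IsNext lam dep x y) :
    shiftMap B z v x = cq (lam x) * v x - v x * cq z + v y := by
  have : (B *ᵥ v) x = cq (lam x) * v x + v y := by
    rw [Matrix.mulVec, dotProduct, Finset.sum_eq_add x y h.ne.symm]
    · rw [hB.diag, hB.next x y h, one_mul]
    · rintro w - ⟨hx, hy⟩
      rw [hB.off x w hx.symm fun h' => hy (h'.unique h), zero_mul]
    · simp
    · simp
  rw [shiftMap_apply, this]
  abel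

theorem shiftMap_of_forall_not_isNext (hB : IsWeyr B lam dep) (z : ℂ) (v : Fin n → ℍ[ℝ])
    {x : Fin n} (h : ∀ y, ¬ IsNext lam dep x y) :
    shiftMap B z v x = cq (lam x) * v x - v x * cq z := by
  rw [shiftMap_apply, Matrix.mulVec, dotProduct, Finset.sum_eq_single x, hB.diag]
  · rintro w - hw
    rw [hB.off x w hw.symm (h w), zero_mul]
  · simp

/-- To show that all entries of `v` satisfy `P`, it suffices to treat `v x` when the
remaining term `q` of `shiftMap B z v x` is zero or an entry already known to satisfy `P`. -/
theorem induction_entries (hB : IsWeyr B lam dep) (z : ℂ) (v : Fin n → ℍ[ℝ])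
    {P : Fin n → ℍ[ℝ] → Prop}
    (step : ∀ x q, shiftMap B z v x = cq (lam x) * v x - v x * cq z + q →
      (q = 0 ∨ ∃ y, lam y = lam x ∧ q = v y ∧ P y q) → P x (v x)) (x : Fin n) : P x (v x) := by
  have hlt {x y : Fin n} (h : IsNext lam dep x y) : x < y := by
    by_contra! hle
    have := hB.monotone hle
    simp only [h.1, Prod.Lex.toLex_le_toLex, lt_irrefl, true_and, false_or, h.2.1] at this
    omega
  induction x using WellFoundedGT.induction with
  | ind x ih =>
    by_cases h : ∃ y, IsNext lam dep x y
    · obtain ⟨y, hy⟩ := h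
      exact step x (v y) (hB.shiftMap_of_isNext z v hy) (Or.inr ⟨y, hy.1, rfl, ih y (hlt hy)⟩)
    · exact step x 0 (by simpa using hB.shiftMap_of_forall_not_isNext z v (by simpa using h))
        (Or.inl rfl)

theorem shiftMap_mem_supportedIn_iff (hB : IsWeyr B lam dep) {z : ℂ} (hz : 0 ≤ z.im) (k : ℕ)
    (v : Fin n → ℍ[ℝ]) :
    shiftMap B z v ∈ supportedIn (layers lam dep z k) (commutant z) ↔
      v ∈ supportedIn (layers lam dep z (k + 1)) (commutant z) := by
  simp only [mem_supportedIn, mem_layers]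
  constructor
  · intro h
    have hlam : ∀ x, lam x ≠ z → v x = 0 := by
      refine hB.induction_entries z v (P := fun x q => lam x ≠ z → q = 0) ?_
      intro x q hx hq hne
      have hq0 : q = 0 := by
        rcases hq with rfl | ⟨y, hy, -, hP⟩
        · rfl
        · exact hP (hy ▸ hne)
      rw [(h x).2 fun h' => hne h'.1, hq0, add_zero] at hx
      exact eq_zero_of_cq_mul_eq (hB.im_nonneg x) hz hne (sub_eq_zero.1 hx.symm)
    have hcomm : ∀ x, v x ∈ commutant z := by
      refine hB.induction_entries z v (P := fun _ q => q ∈ commutant z) ?_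
      intro x q hx hq
      by_cases hne : lam x = z
      · have hq' : q ∈ commutant z := by
          rcases hq with rfl | ⟨y, -, -, hP⟩
          · exact zero_mem _
          · exact hP
        have := sub_mem (h x).1 hq'
        rw [hx, add_sub_cancel_right, hne] at this
        exact mem_commutant_of_commutator_mem this
      · rw [hlam x hne]
        exact zero_mem _
    refine fun y => ⟨hcomm y, fun hy => ?_⟩
    by_cases hyz : lam y = z
    · have hk : k + 1 ≤ dep y := by
        by_contra! hk
        exact hy ⟨hyz, hk⟩
      obtain ⟨x, hx⟩ := hB.exists_prev y (by omega)
      have hval := hB.shiftMap_of_isNext z v hx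
      rw [← hx.1, hyz, mem_commutant.1 (hcomm x), sub_self, zero_add] at hval
      rw [← hval]
      refine (h x).2 fun h' => ?_
      have := hx.2.1
      omega
    · exact hlam y hyz
  · intro h x
    have hzero : cq (lam x) * v x - v x * cq z = 0 := by
      by_cases hne : lam x = z
      · rw [hne, mem_commutant.1 (h x).1, sub_self]
      · rw [(h x).2 fun h' => hne h'.1]
        simp
    by_cases hnext : ∃ y, IsNext lam dep x y
    · obtain ⟨y, hy⟩ := hnext
      rw [hB.shiftMap_of_isNext z v hy, hzero, zero_add]
      refine ⟨(h y).1, fun hx => (h y).2 fun h' => hx ⟨hy.1 ▸ h'.1, ?_⟩⟩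
      have := hy.2.1
      omega
    · rw [hB.shiftMap_of_forall_not_isNext z v (by simpa using hnext), hzero]
      exact ⟨zero_mem _, fun _ => rfl⟩

theorem ker_shiftMap_pow (hB : IsWeyr B lam dep) {z : ℂ} (hz : 0 ≤ z.im) (k : ℕ) :
    LinearMap.ker (shiftMap B z ^ k) = supportedIn (layers lam dep z k) (commutant z) := by
  induction k with
  | zero =>
    ext v
    simp only [pow_zero, LinearMap.mem_ker, Module.End.one_apply, mem_supportedIn, mem_layers,
      Nat.not_lt_zero, and_false, not_false_eq_true, true_imp_iff]
    constructor
    · rintro rfl x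
      exact ⟨zero_mem _, rfl⟩
    · exact fun h => funext fun x => (h x).2
  | succ k ih =>
    ext v
    rw [← hB.shiftMap_mem_supportedIn_iff hz, ← ih, pow_succ]
    rfl

theorem card_layers (hB : IsWeyr B lam dep) {B' : Matrix (Fin n) (Fin n) ℍ[ℝ]}
    {lam' : Fin n → ℂ} {dep' : Fin n → ℕ} (hB' : IsWeyr B' lam' dep') (h : SimilarQ B B')
    {z : ℂ} (hz : 0 ≤ z.im) (k : ℕ) :
    (layers lam dep z k).card = (layers lam' dep' z k).card := by
  have := finrank_ker_shiftMap_pow h z k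
  rw [hB.ker_shiftMap_pow hz, hB'.ker_shiftMap_pow hz, finrank_supportedIn,
    finrank_supportedIn] at this
  exact Nat.eq_of_mul_eq_mul_right (finrank_commutant_pos z) this

theorem card_fiber (hB : IsWeyr B lam dep) {B' : Matrix (Fin n) (Fin n) ℍ[ℝ]}
    {lam' : Fin n → ℂ} {dep' : Fin n → ℕ} (hB' : IsWeyr B' lam' dep') (h : SimilarQ B B')
    (z : ℂ) (k : ℕ) :
    Fintype.card {x // lam x = z ∧ dep x = k} = Fintype.card {x // lam' x = z ∧ dep' x = k} := by
  by_cases hz : 0 ≤ z.im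
  · have h₁ := card_layers_succ lam dep z k
    have h₂ := card_layers_succ lam' dep' z k
    rw [hB.card_layers hB' h hz, hB.card_layers hB' h hz] at h₁
    omega
  · have : IsEmpty {x // lam x = z ∧ dep x = k} := ⟨fun x => hz (x.2.1 ▸ hB.im_nonneg _)⟩
    have : IsEmpty {x // lam' x = z ∧ dep' x = k} := ⟨fun x => hz (x.2.1 ▸ hB'.im_nonneg _)⟩
    simp

theorem eq_of_similarQ (hB : IsWeyr B lam dep) {B' : Matrix (Fin n) (Fin n) ℍ[ℝ]}
    {lam' : Fin n → ℂ} {dep' : Fin n → ℕ} (hB' : IsWeyr B' lam' dep') (h : SimilarQ B B') :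
    lam = lam' ∧ dep = dep' := by
  let key : Fin n → ℂ × ℕ := fun x => (lam x, dep x)
  let key' : Fin n → ℂ × ℕ := fun x => (lam' x, dep' x)
  have e (c : ℂ × ℕ) : {x // key x = c} ≃ {x // key' x = c} := by
    refine Fintype.equivOfCardEq ?_
    simpa only [key, key', Prod.ext_iff] using hB.card_fiber hB' h c.1 c.2
  let σ : Equiv.Perm (Fin n) := Equiv.ofFiberEquiv e
  have hσ (x : Fin n) : key' (σ x) = key x := Equiv.ofFiberEquiv_map e x
  let f' : Fin n → (ℝ ×ₗ ℝ) ×ₗ ℕ := fun x => toLex (lexKey (lam' x), dep' x)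
  have hcomp : f' ∘ σ = fun x => toLex (lexKey (lam x), dep x) := by
    funext x
    have := Prod.ext_iff.1 (hσ x)
    simp only [key, key'] at this
    simp only [f', Function.comp_apply, this.1, this.2]
  have heq : f' ∘ σ = f' ∘ (1 : Equiv.Perm (Fin n)) :=
    Tuple.unique_monotone (hcomp ▸ hB.monotone) hB'.monotone
  rw [hcomp] at heq
  have hx (x : Fin n) : lam x = lam' x ∧ dep x = dep' x := by
    have := congrFun heq x
    simpa [f', lexKey_injective.eq_iff] using this
  exact ⟨funext fun x => (hx x).1, funext fun x => (hx x).2⟩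

theorem ext (hB : IsWeyr B lam dep) {B' : Matrix (Fin n) (Fin n) ℍ[ℝ]}
    (hB' : IsWeyr B' lam dep) : B = B' := by
  ext1 x y
  by_cases hxy : x = y
  · rw [hxy, hB.diag, hB'.diag]
  · by_cases hnext : IsNext lam dep x y
    · rw [hB.next x y hnext, hB'.next x y hnext]
    · rw [hB.off x y hxy hnext, hB'.off x y hxy hnext]

end IsWeyr

end Weyr

section Blocks

variable {s : ℕ}

theorem psum_succ (sz : Fin s → ℕ) (t : Fin s) : psum sz ((t : ℕ) + 1) = psum sz t + sz t := by
  simp [psum, Finset.sum_range_succ]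

theorem psum_mono (sz : Fin s → ℕ) : Monotone (psum sz) := fun _ _ h =>
  Finset.sum_le_sum_of_subset (Finset.range_mono h)

theorem psum_self (sz : Fin s → ℕ) : psum sz s = ∑ t, sz t := by
  rw [psum, Finset.sum_range]
  simp

theorem exists_inBlock (sz : Fin s → ℕ) {r : ℕ} (hr : r < ∑ t, sz t) : ∃ t, InBlock sz t r := by
  classical
  have hex : ∃ m, r < psum sz m := ⟨s, by rwa [psum_self]⟩
  obtain ⟨m, hm, hmin⟩ : ∃ m, r < psum sz m ∧ ∀ k < m, psum sz k ≤ r :=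
    ⟨Nat.find hex, Nat.find_spec hex, fun k hk => not_lt.1 (Nat.find_min hex hk)⟩
  cases m with
  | zero => simp [psum] at hm
  | succ m =>
    have hms : m < s := by
      by_contra! hle
      have := hmin s (by omega)
      rw [psum_self] at this
      omega
    exact ⟨⟨m, hms⟩, hmin m (by omega), hm⟩

theorem InBlock.le_of_le {sz : Fin s → ℕ} {t u : Fin s} {a b : ℕ} (ha : InBlock sz t a)
    (hb : InBlock sz u b) (hab : a ≤ b) : t ≤ u := by
  by_contra! hlt
  have := psum_mono sz (show (u : ℕ) + 1 ≤ t from hlt)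
  have := ha.1
  have := hb.2
  omega

theorem InBlock.unique {sz : Fin s → ℕ} {t u : Fin s} {r : ℕ} (h : InBlock sz t r)
    (h' : InBlock sz u r) : t = u :=
  le_antisymm (h.le_of_le h' le_rfl) (h'.le_of_le h le_rfl)

/-- The number of earlier blocks with the same eigenvalue as block `t`. -/
def blockDepth (lam : Fin s → ℂ) (t : Fin s) : ℕ :=
  (Finset.univ.filter fun u => u < t ∧ lam u = lam t).card

theorem blockDepth_lt {lam : Fin s → ℂ} {t u : Fin s} (htu : t < u) (h : lam t = lam u) :
    blockDepth lam t < blockDepth lam u := by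
  refine Finset.card_lt_card (Finset.ssubset_iff_of_subset ?_ |>.2 ⟨t, ?_⟩)
  · intro v hv
    simp only [Finset.mem_filter, Finset.mem_univ, true_and] at hv ⊢
    exact ⟨hv.1.trans htu, hv.2.trans h⟩
  · simp [htu, h]

theorem blockDepth_succ {lam : Fin s → ℂ} {t u : Fin s} (htu : (u : ℕ) = t + 1)
    (h : lam t = lam u) : blockDepth lam u = blockDepth lam t + 1 := by
  have ht : t ∉ Finset.univ.filter fun v => v < t ∧ lam v = lam t := by simp
  rw [blockDepth, blockDepth, ← Finset.card_insert_of_notMem ht]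
  congr 1
  ext v
  simp only [Finset.mem_filter, Finset.mem_univ, true_and, Finset.mem_insert, h, Fin.ext_iff,
    Fin.lt_def, htu]
  constructor
  · rintro ⟨hv, hv'⟩
    rcases Nat.lt_succ_iff_lt_or_eq.1 hv with hv | hv
    · exact Or.inr ⟨hv, hv'⟩
    · exact Or.inl hv
  · rintro (hv | ⟨hv, hv'⟩)
    · exact ⟨by omega, by rw [← h, Fin.ext hv]⟩
    · exact ⟨by omega, hv'⟩

theorem eq_of_blockDepth_eq {lam : Fin s → ℂ} {t u : Fin s} (h : lam t = lam u)
    (hd : blockDepth lam t = blockDepth lam u) : t = u := by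
  rcases lt_trichotomy t u with hlt | heq | hgt
  · exact absurd hd (blockDepth_lt hlt h).ne
  · exact heq
  · exact absurd hd (blockDepth_lt hgt h.symm).ne'

theorem monotone_lexKey_of_csucceq {lam : Fin s → ℂ}
    (h : ∀ (t : Fin s) (ht : (t : ℕ) + 1 < s), csucceq (lam t) (lam ⟨(t : ℕ) + 1, ht⟩)) :
    Monotone fun t => lexKey (lam t) := by
  suffices ∀ (b : ℕ) (hb : b < s) (t : Fin s), (t : ℕ) ≤ b → lexKey (lam t) ≤ lexKey (lam ⟨b, hb⟩)
    from fun t u htu => this u u.2 t htu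
  intro b
  induction b with
  | zero =>
    intro hb t ht
    rw [show t = ⟨0, hb⟩ from Fin.ext (by simpa using ht)]
  | succ b ih =>
    intro hb t ht
    rcases Nat.le_succ_iff.1 ht with ht | ht
    · exact (ih (by omega) t ht).trans (lexKey_le_of_csucceq (h ⟨b, by omega⟩ hb))
    · rw [show t = ⟨b + 1, hb⟩ from Fin.ext ht]

theorem eigenvalue_eq_of_between {lam : Fin s → ℂ} (hmono : Monotone fun t => lexKey (lam t))
    {t u v : Fin s} (htu : t ≤ u) (huv : u ≤ v) (h : lam t = lam v) : lam t = lam u :=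
  lexKey_injective (le_antisymm (hmono htu) ((hmono huv).trans_eq (congrArg lexKey h.symm)))

theorem eq_succ_of_blockDepth_eq {lam : Fin s → ℂ} (hmono : Monotone fun t => lexKey (lam t))
    {t u : Fin s} (h : lam u = lam t) (hd : blockDepth lam u = blockDepth lam t + 1) :
    (u : ℕ) = t + 1 := by
  have htu : t < u := by
    by_contra! hle
    rcases hle.lt_or_eq with hlt | heq
    · have := blockDepth_lt hlt h
      omega
    · rw [heq] at hd
      omega
  have hts : (t : ℕ) + 1 < s := lt_of_le_of_lt htu u.2
  have ht := eigenvalue_eq_of_between hmono (t := t) (u := ⟨t + 1, hts⟩) (v := u)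
    (Fin.le_def.2 (by simp)) (Fin.le_def.2 htu) h.symm
  have hdt := blockDepth_succ (u := ⟨t + 1, hts⟩) rfl ht
  exact congrArg Fin.val (eq_of_blockDepth_eq (h.trans ht) (hd.trans hdt.symm))

theorem exists_pred_of_blockDepth_ne_zero {lam : Fin s → ℂ}
    (hmono : Monotone fun t => lexKey (lam t)) {u : Fin s} (h : blockDepth lam u ≠ 0) :
    ∃ t : Fin s, (u : ℕ) = t + 1 ∧ lam t = lam u := by
  obtain ⟨v, hv⟩ := Finset.card_ne_zero.1 h
  simp only [Finset.mem_filter, Finset.mem_univ, true_and, Fin.lt_def] at hv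
  refine ⟨⟨u - 1, by omega⟩, by simp; omega, ?_⟩
  rw [← hv.2]
  exact (eigenvalue_eq_of_between hmono (Fin.le_def.2 (by simp; omega))
    (Fin.le_def.2 (by simp)) hv.2).symm

end Blocks

theorem ncard_setOf_inBlock {n s : ℕ} {sz : Fin s → ℕ} (hsum : ∑ t, sz t = n) (t : Fin s) :
    {w : Fin n | InBlock sz t w}.ncard = sz t := by
  have himg : Fin.val '' {w : Fin n | InBlock sz t w} =
      Finset.Ico (psum sz t) (psum sz ((t : ℕ) + 1)) := by
    ext r
    simp only [Set.mem_image, Set.mem_ofPred_eq, Finset.coe_Ico, Set.mem_Ico]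
    constructor
    · rintro ⟨w, hw, rfl⟩
      exact hw
    · intro hr
      have := psum_mono sz (show (t : ℕ) + 1 ≤ s from t.2)
      rw [psum_self, hsum] at this
      exact ⟨⟨r, by omega⟩, hr, rfl⟩
  rw [← Set.ncard_image_of_injective _ Fin.val_injective, himg, Set.ncard_coe_finset,
    Nat.card_Ico, psum_succ]
  omega

theorem IsModifiedJordan.exists_isWeyr {n : ℕ} {B : Matrix (Fin n) (Fin n) ℍ[ℝ]}
    (hB : IsModifiedJordan B) : ∃ lam dep, IsWeyr B lam dep := by
  obtain ⟨s, sz, lam, -, hsum, him, hord, hdiag, hzero, hsup⟩ := hB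
  have hex (x : Fin n) : ∃ t, InBlock sz t x := exists_inBlock sz (by rw [hsum]; exact x.2)
  choose blk hblk using hex
  have hmono := monotone_lexKey_of_csucceq hord
  have hcard (x : Fin n) : {w | lam (blk w) = lam (blk x) ∧
      blockDepth lam (blk w) = blockDepth lam (blk x)}.ncard = sz (blk x) := by
    rw [← ncard_setOf_inBlock hsum]
    congr 1
    ext w
    constructor
    · intro hw
      have := hblk w
      rwa [eq_of_blockDepth_eq hw.1 hw.2] at this
    · intro hw
      simp [(hblk w).unique hw]
  have hnext (x y : Fin n) : IsNext (fun x => lam (blk x)) (fun x => blockDepth lam (blk x)) x y ↔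
      (blk y : ℕ) = blk x + 1 ∧ lam (blk x) = lam (blk y) ∧
        (x : ℕ) - psum sz (blk x) = (y : ℕ) - psum sz ((blk x : ℕ) + 1) := by
    simp only [IsNext, hcard]
    have hx := (hblk x).1
    have hy := (hblk y).1
    have hp := psum_succ sz (blk x)
    constructor
    · rintro ⟨h₁, h₂, h₃⟩
      exact ⟨eq_succ_of_blockDepth_eq hmono h₁ h₂, h₁.symm, by omega⟩
    · rintro ⟨h₁, h₂, h₃⟩
      rw [h₁] at hy
      exact ⟨h₂.symm, blockDepth_succ h₁ h₂, by omega⟩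
  refine ⟨fun x => lam (blk x), fun x => blockDepth lam (blk x), fun x => him _, ?_, ?_, ?_, ?_, ?_⟩
  · intro x y hxy
    have hle := (hblk x).le_of_le (hblk y) hxy
    rw [Prod.Lex.toLex_le_toLex]
    rcases (hmono hle).lt_or_eq with hlt | heq
    · exact Or.inl hlt
    · refine Or.inr ⟨heq, ?_⟩
      rcases hle.lt_or_eq with hlt | hblk_eq
      · exact (blockDepth_lt hlt (lexKey_injective heq)).le
      · simp [hblk_eq]
  · intro x
    simpa using hdiag x x (blk x) (hblk x) (hblk x)
  · intro x y h
    obtain ⟨h₁, h₂, h₃⟩ := (hnext x y).1 h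
    have hs : (blk x : ℕ) + 1 < s := h₁ ▸ (blk y).2
    have hy : blk y = ⟨(blk x : ℕ) + 1, hs⟩ := Fin.ext h₁
    rw [((hsup (blk x) hs).2 (hy ▸ h₂)).2 x y (hblk x) (hy ▸ hblk y), if_pos h₃]
  · intro x y hxy h
    by_cases h₁ : (blk y : ℕ) = blk x + 1
    · have hs : (blk x : ℕ) + 1 < s := h₁ ▸ (blk y).2
      have hy : blk y = ⟨(blk x : ℕ) + 1, hs⟩ := Fin.ext h₁
      by_cases h₂ : lam (blk x) = lam (blk y)
      · rw [((hsup (blk x) hs).2 (hy ▸ h₂)).2 x y (hblk x) (hy ▸ hblk y), if_neg]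
        exact fun h₃ => h ((hnext x y).2 ⟨h₁, h₂, h₃⟩)
      · exact (hsup (blk x) hs).1 (hy ▸ h₂) x y (hblk x) (hy ▸ hblk y)
    · by_cases h₂ : (blk y : ℕ) = blk x
      · have := hdiag x y (blk x) (hblk x) (Fin.ext h₂ ▸ hblk y)
        rwa [if_neg hxy] at this
      · exact hzero x y (blk x) (blk y) (hblk x) (hblk y) h₂ h₁
  · intro y hy
    obtain ⟨t, ht, hlam⟩ := exists_pred_of_blockDepth_ne_zero hmono hy
    have hs : (t : ℕ) + 1 < s := ht ▸ (blk y).2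
    have hyt : blk y = ⟨(t : ℕ) + 1, hs⟩ := Fin.ext ht
    have hsz : sz (blk y) ≤ sz t := hyt ▸ ((hsup t hs).2 (hyt ▸ hlam)).1
    have hlow := (hblk y).1
    have hupp := (hblk y).2
    rw [psum_succ, ht, psum_succ] at hupp
    rw [ht, psum_succ] at hlow
    let x : Fin n := ⟨y - sz t, by omega⟩
    have hxt : blk x = t :=
      (hblk x).unique ⟨by simp only [x]; omega, by rw [psum_succ]; simp only [x]; omega⟩
    refine ⟨x, (hnext x y).2 ⟨by rw [hxt, ht], by rw [hxt, hlam], ?_⟩⟩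
    rw [hxt, psum_succ]
    simp only [x]
    omega

/-- **Lemma 2.2 (uniqueness).** If two modified Jordan matrices are similar over `ℍ`,
then they are equal. -/
theorem modified_jordan_unique {n : ℕ} (B B' : Matrix (Fin n) (Fin n) ℍ[ℝ])
    (hB : IsModifiedJordan B) (hB' : IsModifiedJordan B') (h : SimilarQ B B') :
    B = B' := by
  obtain ⟨lam, dep, hW⟩ := hB.exists_isWeyr
  obtain ⟨lam', dep', hW'⟩ := hB'.exists_isWeyr
  obtain ⟨rfl, rfl⟩ := hW.eq_of_similarQ hW' h
  exact hW.ext hW'
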